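/- Let K be an algebraically closed field, n ≥ 3. The ideal of K[Mat_n] generated by det − 1 and d is prime, where d = det((∂s_k/∂ξ_{in})_{k,i}); equivalently the variety {A ∈ SL_n(K) : d(A) = 0} is irreducible and (det − 1, d) is radical. -/

import Mathlib

/-!
The `s_k` are the coefficients of `det (1 + t A)`, so their gradients are the coefficients of its
adjugate. Comparing coefficients in `adj (1 + t A) * (1 + t A) = det (1 + t A)` shows that the last
rows of these coefficients are, up to unitriangular row operations, the vectors `e_n (-A) ^ k`: up
to sign, `d` is the determinant `δ` with rows `e_n A ^ k`. Expanding `δ` along its first row leaves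
the determinant `κ` with rows `v B ^ k`, where `B` is the upper left block of `A` and `v` the rest
of its last row. Thus `d` does not involve the last column of `A`, while `det A` is a linear form in
that column with coefficient `det B` at the corner. If `κ` is prime then it does not divide `det B`,
since `κ` vanishes at `v = 0`, so modulo `d` the polynomial `det A - 1` is a nonzero linear form
minus one over a domain, and such a polynomial is prime.

That `κ` is prime is proved by induction on the size. Specializing `v` to the last unit vector turns
`κ` into the `δ` of the same size, which is prime since the `κ` of the next smaller size is. Both
are homogeneous of the same degree in `B`, so a proper factor of `κ` would be a polynomial in `v`
alone; evaluating `B` at a nilpotent shift shows that it would divide a power of `v₀`, and it would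
be a unit at the last unit vector, where `v₀ = 0`. Over a field irreducible then means prime, and a
Gauss type argument descends primality from the fraction field to the base domain.
-/

open MvPolynomial

/-- The determinant of the generic `n × n` matrix. -/
noncomputable def genDet (K : Type*) [CommRing K] (n : ℕ) :
    MvPolynomial (Fin n × Fin n) K :=
  Matrix.det (Matrix.of fun i j : Fin n => X (i, j))

/-- `s_k`: the sum of all `k × k` principal minors of the generic `n × n` matrix. -/
noncomputable def sPolyK (K : Type*) [CommRing K] (n k : ℕ) :
    MvPolynomial (Fin n × Fin n) K :=
  ∑ Λ ∈ (Finset.univ.powersetCard k : Finset (Finset (Fin n))),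
    Matrix.det (Matrix.of fun i j : Λ => X ((i : Fin n), (j : Fin n)))

/-- `d = det((∂s_k/∂ξ_{in})_{k,i})`. -/
noncomputable def dPoly (K : Type*) [CommRing K] (n : ℕ) (hn : 1 ≤ n) :
    MvPolynomial (Fin n × Fin n) K :=
  Matrix.det (Matrix.of fun k i : Fin n =>
    pderiv (i, (⟨n - 1, by omega⟩ : Fin n)) (sPolyK K n ((k : ℕ) + 1)))

section PrimePolynomials

variable {σ : Type*}

lemma isUnit_of_mul_of_isUnit_map {A B : Type*} [CommRing A] [IsDomain A] [CommRing B] [IsDomain B]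
    (φ : A →+* B) {G H : MvPolynomial σ A}
    (hdeg : (map φ (G * H)).totalDegree = (G * H).totalDegree) (hne : map φ (G * H) ≠ 0)
    (hG : IsUnit (map φ G)) (hC : ∀ a, C a ∣ G → IsUnit (φ a) → IsUnit a) : IsUnit G := by
  have hGH : G ≠ 0 ∧ H ≠ 0 := by
    refine ⟨?_, ?_⟩ <;> rintro rfl <;> simp at hne
  have hφGH : map φ G ≠ 0 ∧ map φ H ≠ 0 := mul_ne_zero_iff.mp (by rwa [← map_mul])
  have hG0 : G.totalDegree = 0 := by
    rw [map_mul, totalDegree_mul_of_isDomain hφGH.1 hφGH.2,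
      totalDegree_mul_of_isDomain hGH.1 hGH.2,
      (isUnit_iff_totalDegree_of_isReduced.mp hG).2, zero_add] at hdeg
    have hH : (map φ H).totalDegree ≤ H.totalDegree :=
      Finset.sup_mono (support_map_subset φ H)
    lia
  obtain ⟨a, rfl⟩ : ∃ a, G = C a := ⟨_, totalDegree_eq_zero_iff_eq_C.mp hG0⟩
  rw [map_C, isUnit_iff_eq_C_of_isReduced] at hG
  obtain ⟨b, hb, hab⟩ := hG
  rw [C_injective _ _ |>.eq_iff] at hab
  exact (hC a dvd_rfl (hab ▸ hb)).map C

lemma irreducible_of_irreducible_map {A B : Type*} [CommRing A] [IsDomain A] [CommRing B]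
    [IsDomain B] (φ : A →+* B) {F : MvPolynomial σ A}
    (hdeg : (map φ F).totalDegree = F.totalDegree) (hirr : Irreducible (map φ F))
    (hC : ∀ a, C a ∣ F → IsUnit (φ a) → IsUnit a) : Irreducible F where
  not_isUnit hF := hirr.not_isUnit (hF.map (map φ))
  isUnit_or_isUnit G H hGH := by
    subst hGH
    refine (hirr.isUnit_or_isUnit (map_mul _ G H)).imp (fun hG => ?_) fun hH => ?_
    · exact isUnit_of_mul_of_isUnit_map φ hdeg hirr.ne_zero hG
        fun a ha => hC a (ha.mul_right H)
    · rw [mul_comm] at hdeg hirr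
      exact isUnit_of_mul_of_isUnit_map φ hdeg hirr.ne_zero hH
        fun a ha => hC a (ha.mul_left G)

lemma mem_nonZeroDivisors_of_isUnit_constantCoeff {S : Type*} [CommRing S] {F : MvPolynomial σ S}
    (hF : IsUnit (constantCoeff F)) : F ∈ nonZeroDivisors (MvPolynomial σ S) := by
  have hunit : IsUnit (F : MvPowerSeries σ S) := by
    rw [MvPowerSeries.isUnit_iff_constantCoeff]
    exact hF
  rw [mem_nonZeroDivisors_iff_right]
  intro Q hQ
  have hcoe : (Q : MvPowerSeries σ S) * F = 0 := by rw [← coe_mul, hQ, coe_zero]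
  exact coe_eq_zero_iff.mp (hunit.mul_left_eq_zero.mp hcoe)

lemma mem_nonZeroDivisors_of_isUnit_eval {S : Type*} [CommRing S] {F : MvPolynomial σ S}
    (x : σ → S) (hF : IsUnit (eval x F)) : F ∈ nonZeroDivisors (MvPolynomial σ S) := by
  have hinj : Function.Injective (aeval fun i => X i + C (x i) : MvPolynomial σ S →ₐ[S] _) := by
    refine Function.LeftInverse.injective (g := aeval fun i => X i - C (x i)) fun P => ?_
    rw [← AlgHom.comp_apply, comp_aeval]
    simp
  have hconst : constantCoeff (aeval (fun i => X i + C (x i)) F) = eval x F := by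
    have hcomp : (constantCoeff (σ := σ)).comp
        (aeval fun i => X i + C (x i) : MvPolynomial σ S →ₐ[S] MvPolynomial σ S).toRingHom =
        eval x := by
      ext <;> simp
    exact congr($hcomp F)
  refine mem_nonZeroDivisors_of_injective hinj ?_
  exact mem_nonZeroDivisors_of_isUnit_constantCoeff (by rwa [hconst])

lemma map_mk_span_singleton_eq_zero_iff {R : Type*} [CommRing R] (r : R) (P : MvPolynomial σ R) :
    map (Ideal.Quotient.mk (Ideal.span {r})) P = 0 ↔ C r ∣ P := by
  simp only [C_dvd_iff_dvd_coeff, MvPolynomial.ext_iff, coeff_map, coeff_zero,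
    Ideal.Quotient.eq_zero_iff_mem, Ideal.mem_span_singleton]

lemma dvd_of_dvd_C_mul {R : Type*} [CommRing R] [IsDomain R] {F P : MvPolynomial σ R}
    (x : σ → R) (hx : IsUnit (eval x F)) {r : R} (hr : r ≠ 0) (h : F ∣ C r * P) : F ∣ P := by
  obtain ⟨Q, hQ⟩ := h
  let π := Ideal.Quotient.mk (Ideal.span {r})
  have hreg : map π F ∈ nonZeroDivisors _ :=
    mem_nonZeroDivisors_of_isUnit_eval (π ∘ x) (by rw [← map_eval]; exact hx.map π)
  have hmap : map π F * map π Q = 0 := by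
    rw [← map_mul, ← hQ, map_mul, map_C, Ideal.Quotient.mk_singleton_self, C_0, zero_mul]
  obtain ⟨Q', rfl⟩ := (map_mk_span_singleton_eq_zero_iff r Q).mp
    ((mul_left_mem_nonZeroDivisors_eq_zero_iff hreg).mp hmap)
  exact ⟨Q', mul_left_cancel₀ (C_ne_zero.mpr hr) (by rw [hQ]; ring)⟩

attribute [local instance] algebraMvPolynomial in
lemma exists_dvd_C_mul_of_map_dvd_map {R : Type*} (K : Type*) [CommRing R] [IsDomain R] [Field K]
    [Algebra R K] [IsFractionRing R K] {F P : MvPolynomial σ R}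
    (h : map (algebraMap R K) F ∣ map (algebraMap R K) P) : ∃ r : R, r ≠ 0 ∧ F ∣ C r * P := by
  have hmem : algebraMap (MvPolynomial σ R) (MvPolynomial σ K) P ∈
      (Ideal.span {F}).map (algebraMap _ _) := by
    rwa [Ideal.map_span, Set.image_singleton, Ideal.mem_span_singleton]
  rw [IsLocalization.algebraMap_mem_map_algebraMap_iff ((nonZeroDivisors R).map C)] at hmem
  obtain ⟨_, ⟨r, hr, rfl⟩, hrP⟩ := hmem
  exact ⟨r, nonZeroDivisors.ne_zero hr, Ideal.mem_span_singleton.mp hrP⟩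

/- The unit value at `x` plays the role of primitivity in Gauss's lemma: it keeps `F` a
nonzerodivisor modulo every constant, so that denominators can be cleared. -/
lemma prime_of_prime_map_fractionRing {R : Type*} (K : Type*) [CommRing R] [IsDomain R] [Field K]
    [Algebra R K] [IsFractionRing R K] {F : MvPolynomial σ R} (x : σ → R)
    (hx : IsUnit (eval x F)) (hF : Prime (map (algebraMap R K) F)) : Prime F := by
  have hdvd : ∀ P, map (algebraMap R K) F ∣ map (algebraMap R K) P → F ∣ P := fun P hP =>
    have ⟨_, hr, hrP⟩ := exists_dvd_C_mul_of_map_dvd_map K hP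
    dvd_of_dvd_C_mul x hx hr hrP
  refine ⟨fun h0 => hF.ne_zero (by rw [h0, map_zero]), fun hu => hF.not_isUnit (hu.map _),
    fun P Q hPQ => ?_⟩
  have hmap := map_dvd (map (algebraMap R K)) hPQ
  rw [map_mul] at hmap
  exact (hF.dvd_or_dvd hmap).imp (hdvd P) (hdvd Q)

lemma irreducible_sum_C_mul_X_sub_one {K : Type*} [Field K] [Fintype σ] {a : σ → K} (ha : a ≠ 0) :
    Irreducible (∑ i, C (a i) * X i - 1 : MvPolynomial σ K) := by
  classical
  obtain ⟨i, hi⟩ := Function.ne_iff.mp ha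
  set L : MvPolynomial σ K := ∑ i, C (a i) * X i with hL
  have hcoeff : coeff (Finsupp.single i 1) L = a i := by
    simp [hL, coeff_sum, coeff_C_mul, coeff_X, Finsupp.single_left_inj]
  have hdegL : L.totalDegree = 1 :=
    (IsHomogeneous.sum _ _ _ fun i _ => isHomogeneous_C_mul_X (a i) i).totalDegree
      fun h0 => hi (by rw [← hcoeff, hL, h0, coeff_zero, Pi.zero_apply])
  have hdeg : (L - 1).totalDegree = 1 := by
    rw [sub_eq_add_neg, totalDegree_add_eq_left_of_totalDegree_lt, hdegL]
    rw [totalDegree_neg, totalDegree_one, hdegL]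
    exact one_pos
  refine irreducible_of_totalDegree_eq_one hdeg fun x hx => ?_
  have hdvd := hx (Finsupp.single i 1)
  rw [coeff_sub, hcoeff, coeff_one,
    if_neg (Finsupp.single_ne_zero.mpr one_ne_zero).symm, sub_zero] at hdvd
  exact isUnit_of_dvd_unit hdvd (isUnit_iff_ne_zero.mpr hi)

lemma prime_sum_C_mul_X_sub_one {R : Type*} [CommRing R] [IsDomain R] [Fintype σ] {a : σ → R}
    (ha : a ≠ 0) : Prime (∑ i, C (a i) * X i - 1 : MvPolynomial σ R) := by
  have hmap : algebraMap R (FractionRing R) ∘ a ≠ 0 := fun h => ha <| funext fun i =>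
    (map_eq_zero_iff _ (IsFractionRing.injective R (FractionRing R))).mp (congr_fun h i)
  refine prime_of_prime_map_fractionRing (FractionRing R) 0 (by simp) ?_
  simpa using (irreducible_sum_C_mul_X_sub_one hmap).prime

lemma isPrime_span_pair {A B : Type*} [CommRing A] [CommRing B] (f : A →+* B)
    (hf : Function.Surjective f) {a b : A} (hker : RingHom.ker f = Ideal.span {b})
    (ha : Prime (f a)) : (Ideal.span {a, b}).IsPrime := by
  have hcomap : (Ideal.span {f a}).comap f = Ideal.span {a, b} := by
    rw [← Set.image_singleton, ← Ideal.map_span, Ideal.comap_map_of_surjective' f hf, hker,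
      Ideal.span_insert]
  rw [← hcomap]
  have := (Ideal.span_singleton_prime ha.ne_zero).mpr ha
  exact Ideal.comap_isPrime f _

lemma isPrime_span_sub_one_pair {A T : Type*} [CommRing A] [CommRing T] [IsDomain T] [Fintype σ]
    (e : A ≃+* MvPolynomial σ T) {κ : T} (hκ : Prime κ) {b d : A} (hb : Associated (e b) (C κ))
    {a : σ → T} (hd : e d = ∑ i, C (a i) * X i) {i : σ} (hi : ¬ κ ∣ a i) :
    (Ideal.span {d - 1, b}).IsPrime := by
  have : (Ideal.span {κ}).IsPrime := (Ideal.span_singleton_prime hκ.ne_zero).mpr hκ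
  let π := Ideal.Quotient.mk (Ideal.span {κ})
  refine isPrime_span_pair ((map π).comp (e : A →+* MvPolynomial σ T)) ?_ ?_ ?_
  · exact (map_surjective π Ideal.Quotient.mk_surjective).comp e.surjective
  · ext P
    rw [RingHom.mem_ker, RingHom.comp_apply, map_mk_span_singleton_eq_zero_iff,
      ← hb.dvd_iff_dvd_left, Ideal.mem_span_singleton]
    exact map_dvd_iff e
  · have ha : π ∘ a ≠ 0 := fun h => hi <| by
      rw [← Ideal.mem_span_singleton, ← Ideal.Quotient.eq_zero_iff_mem]
      exact congr_fun h i
    simpa [hd] using prime_sum_C_mul_X_sub_one ha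

end PrimePolynomials

open Matrix

section DerivationDet

variable {R A M n : Type*} [CommRing R] [CommRing A] [Algebra R A] [AddCommGroup M] [Module A M]
  [Module R M] [Fintype n] [DecidableEq n]

lemma derivation_prod {ι : Type*} [DecidableEq ι] (D : Derivation R A M) (s : Finset ι)
    (f : ι → A) : D (∏ i ∈ s, f i) = ∑ i ∈ s, (∏ j ∈ s.erase i, f j) • D (f i) := by
  induction s using Finset.induction_on with
  | empty => simp
  | insert a s ha ih =>
    rw [Finset.prod_insert ha, D.leibniz, ih, Finset.sum_insert ha, Finset.erase_insert ha,
      Finset.smul_sum, add_comm]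
    congr 1
    refine Finset.sum_congr rfl fun i hi => ?_
    have hia : a ≠ i := fun h => ha (h ▸ hi)
    rw [Finset.erase_insert_of_ne hia, Finset.prod_insert (by simp [ha]), mul_smul]

lemma adjugate_apply_eq_sum_perm (N : Matrix n n A) (i j : n) :
    N.adjugate j i = ∑ σ : Equiv.Perm n,
      Equiv.Perm.sign σ • if σ j = i then ∏ k ∈ Finset.univ.erase j, N (σ k) k else 0 := by
  have hcramer : N.adjugate j i = (N.updateCol j (Pi.single i 1)).det := by
    rw [← cramer_apply, cramer_eq_adjugate_mulVec, mulVec_single_one, col_apply]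
  rw [hcramer, det_apply]
  refine Finset.sum_congr rfl fun σ _ => ?_
  have hprod : ∏ k ∈ Finset.univ.erase j, N.updateCol j (Pi.single i 1) (σ k) k =
      ∏ k ∈ Finset.univ.erase j, N (σ k) k :=
    Finset.prod_congr rfl fun k hk => updateCol_ne (Finset.ne_of_mem_erase hk)
  rw [← Finset.mul_prod_erase _ _ (Finset.mem_univ j), hprod, updateCol_self, Pi.single_apply,
    ite_mul, one_mul, zero_mul]

lemma derivation_det (D : Derivation R A M) (N : Matrix n n A) :
    D N.det = ∑ i, ∑ j, N.adjugate j i • D (N i j) := by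
  have hterm : ∀ (j : n) (σ : Equiv.Perm n),
      ∑ i, (Equiv.Perm.sign σ • if σ j = i then ∏ k ∈ Finset.univ.erase j, N (σ k) k else 0) •
        D (N i j) =
      Equiv.Perm.sign σ • (∏ k ∈ Finset.univ.erase j, N (σ k) k) • D (N (σ j) j) := fun j σ => by
    rw [Finset.sum_eq_single (σ j) (fun i _ hi => by rw [if_neg hi.symm, smul_zero, zero_smul])
      (by simp), if_pos rfl, smul_assoc]
  simp only [det_apply, map_sum, adjugate_apply_eq_sum_perm, Finset.sum_smul]
  rw [Finset.sum_comm]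
  rw [Finset.sum_congr rfl fun j _ =>
    Finset.sum_comm.trans (Finset.sum_congr rfl fun σ _ => hterm j σ), Finset.sum_comm]
  refine Finset.sum_congr rfl fun σ _ => ?_
  rw [Units.smul_def, map_zsmul, derivation_prod, Finset.smul_sum]
  rfl

end DerivationDet

section UnitPencil

variable {A n : Type*} [CommRing A] [DecidableEq n]

/-- The matrix pencil `1 + t B` over `A[t]`. The coefficients of its determinant are the sums of
principal minors of `B`, and those of its adjugate are the gradients of these sums. -/
noncomputable def unitPencil (B : Matrix n n A) : Matrix n n (Polynomial A) :=
  1 + (Polynomial.X : Polynomial A) • B.map Polynomial.C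

lemma unitPencil_apply (B : Matrix n n A) (i j : n) :
    unitPencil B i j =
      Polynomial.monomial 0 ((1 : Matrix n n A) i j) + Polynomial.monomial 1 (B i j) := by
  rw [unitPencil, Matrix.add_apply, Matrix.smul_apply, map_apply, smul_eq_mul,
    Polynomial.X_mul_C, Polynomial.C_mul_X_eq_monomial, Polynomial.monomial_zero_left,
    ← map_apply (f := Polynomial.C) (M := (1 : Matrix n n A)),
    Matrix.map_one _ (map_zero _) (map_one _)]

variable [Fintype n]

lemma derivation_coeff_det_unitPencil {R M : Type*} [CommRing R] [Algebra R A] [AddCommGroup M]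
    [Module A M] [Module R M] [IsScalarTower R A M]
    (D : Derivation R A M) (B : Matrix n n A) (k : ℕ) :
    D ((unitPencil B).det.coeff (k + 1)) =
      ∑ i, ∑ j, ((unitPencil B).adjugate j i).coeff k • D (B i j) := by
  have hentry : ∀ i j, D.mapCoeffs (unitPencil B i j) = PolynomialModule.single A 1 (D (B i j)) :=
    fun i j => by
      have hone : D ((1 : Matrix n n A) i j) = 0 := by
        rw [one_apply]
        split_ifs
        exacts [D.map_one_eq_zero, map_zero D]
      rw [unitPencil_apply, map_add, D.mapCoeffs_monomial, D.mapCoeffs_monomial, hone,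
        PolynomialModule.single_zero, zero_add]
  rw [← D.mapCoeffs_apply, derivation_det]
  simp only [hentry]
  simp [PolynomialModule.coeff_sum, Finsupp.finsetSum_apply, PolynomialModule.smul_single_apply]

lemma map_coeff_zero_adjugate_unitPencil (B : Matrix n n A) :
    (unitPencil B).adjugate.map (Polynomial.coeff · 0) = 1 := by
  have hconst : Polynomial.constantCoeff.mapMatrix (unitPencil B) = 1 := by
    ext i j
    simp [unitPencil_apply]
  have h := RingHom.map_adjugate Polynomial.constantCoeff (unitPencil B)
  rwa [hconst, adjugate_one] at h

lemma map_coeff_succ_adjugate_unitPencil (B : Matrix n n A) (k : ℕ) :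
    (unitPencil B).adjugate.map (Polynomial.coeff · (k + 1)) =
      (unitPencil B).det.coeff (k + 1) • 1 -
        (unitPencil B).adjugate.map (Polynomial.coeff · k) * B := by
  have h := adjugate_mul (unitPencil B)
  nth_rw 2 [unitPencil] at h
  rw [Matrix.mul_add, mul_one, Matrix.mul_smul] at h
  ext i j
  have hij := congr((($h) i j).coeff (k + 1))
  refine eq_sub_of_add_eq ?_
  simpa [mul_apply, Polynomial.coeff_X_mul, one_apply, apply_ite (Polynomial.coeff · (k + 1))]
    using hij

end UnitPencil

section KrylovDet

variable {R : Type*} [CommRing R] {m : ℕ}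

/-- The Krylov determinant of `B` and the row vector `v`: the determinant with rows
`v, v B, …, v B ^ (m - 1)`. -/
noncomputable def krylovDet (B : Matrix (Fin m) (Fin m) R) (v : Fin m → R) : R :=
  det (of fun k : Fin m => v ᵥ* B ^ (k : ℕ))

lemma map_krylovDet {S : Type*} [CommRing S] (f : R →+* S) (B : Matrix (Fin m) (Fin m) R)
    (v : Fin m → R) : f (krylovDet B v) = krylovDet (B.map f) (f ∘ v) := by
  have hpow : ∀ k : ℕ, B.map f ^ k = (B ^ k).map f := fun k => (map_pow f.mapMatrix B k).symm
  rw [krylovDet, krylovDet, f.map_det]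
  congr 1
  ext k j
  rw [of_apply, hpow, ← f.map_vecMul]
  rfl

lemma krylovDet_smul (t : R) (B : Matrix (Fin m) (Fin m) R) (v : Fin m → R) :
    krylovDet (t • B) v = t ^ (∑ k : Fin m, (k : ℕ)) * krylovDet B v := by
  rw [krylovDet, krylovDet, ← Finset.prod_pow_eq_pow_sum, ← det_mul_column]
  congr 1
  ext k j
  rw [of_apply, of_apply, of_apply, smul_pow, vecMul_smul, Pi.smul_apply, smul_eq_mul]

lemma det_vecMul_aeval_monic (B : Matrix (Fin m) (Fin m) R) (v : Fin m → R)
    (p : Fin m → Polynomial R) (hdeg : ∀ k, (p k).natDegree = k) (hmonic : ∀ k, (p k).Monic) :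
    det (of fun k : Fin m => v ᵥ* Polynomial.aeval B (p k)) = krylovDet B v := by
  have hfactor : (of fun k : Fin m => v ᵥ* Polynomial.aeval B (p k)) =
      (of fun i j : Fin m => (p j).coeff i)ᵀ * of fun k : Fin m => v ᵥ* B ^ (k : ℕ) := by
    ext k j
    rw [of_apply, Polynomial.aeval_eq_sum_range' ((hdeg k).trans_lt k.isLt), vecMul_sum,
      Finset.sum_range, Finset.sum_apply, mul_apply]
    simp only [vecMul_smul, Pi.smul_apply, smul_eq_mul, transpose_apply, of_apply]
  rw [hfactor, det_mul, det_transpose, det_matrixOfPolynomials p hdeg hmonic, one_mul, krylovDet]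

lemma det_of_vecMul_recursion (B : Matrix (Fin m) (Fin m) R) (r : ℕ → Fin m → R) (c : ℕ → R)
    (hr : ∀ k, r (k + 1) = c k • r 0 + r k ᵥ* B) :
    det (of fun k : Fin m => r k) = krylovDet B (r 0) := by
  nontriviality R
  have hpoly : ∀ k : ℕ, ∃ p : Polynomial R,
      p.natDegree = k ∧ p.Monic ∧ r k = r 0 ᵥ* Polynomial.aeval B p := fun k => by
    induction k with
    | zero => exact ⟨1, by simp, Polynomial.monic_one, by simp⟩
    | succ k ih =>
      obtain ⟨p, hdeg, hmonic, hp⟩ := ih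
      have hlt : (Polynomial.C (c k)).degree < (p * Polynomial.X).degree :=
        Polynomial.degree_lt_degree (by simp [Polynomial.natDegree_mul_X hmonic.ne_zero])
      refine ⟨p * Polynomial.X + Polynomial.C (c k), ?_, ?_, ?_⟩
      · rw [Polynomial.natDegree_add_C, Polynomial.natDegree_mul_X hmonic.ne_zero, hdeg]
      · exact (hmonic.mul Polynomial.monic_X).add_of_left hlt
      · rw [hr, hp, map_add, map_mul, Polynomial.aeval_X, Polynomial.aeval_C, vecMul_add,
          vecMul_vecMul, Algebra.algebraMap_eq_smul_one, vecMul_smul, vecMul_one, add_comm]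
  choose p hdeg hmonic hp using hpoly
  rw [← det_vecMul_aeval_monic B (r 0) (fun k => p k) (fun k => hdeg k) (fun k => hmonic k)]
  simp only [← hp]

lemma krylovDet_single_last (A : Matrix (Fin (m + 1)) (Fin (m + 1)) R) :
    krylovDet A (Pi.single (Fin.last m) 1) = (-1) ^ m *
      krylovDet (A.submatrix Fin.castSucc Fin.castSucc) (fun j => A (Fin.last m) j.castSucc) := by
  set r : ℕ → Fin (m + 1) → R := fun k => Pi.single (Fin.last m) 1 ᵥ* A ^ k with hr
  have hr0 : r 0 = Pi.single (Fin.last m) 1 := by simp only [hr, pow_zero, vecMul_one]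
  have hrow : (fun j : Fin m => r 1 j.castSucc) = fun j => A (Fin.last m) j.castSucc := by
    simp [hr]
  have hrec : ∀ k, (fun j : Fin m => r (k + 2) j.castSucc) =
      r (k + 1) (Fin.last m) • (fun j => r 1 j.castSucc) +
        (fun j => r (k + 1) j.castSucc) ᵥ* A.submatrix Fin.castSucc Fin.castSucc := fun k => by
    have hmul : r (k + 2) = r (k + 1) ᵥ* A := by
      rw [hr, vecMul_vecMul, ← pow_succ]
    ext j
    rw [hrow, hmul]
    simp [vecMul, dotProduct, Fin.sum_univ_castSucc, add_comm]
  have hdet : krylovDet A (Pi.single (Fin.last m) 1) = det (of fun k : Fin (m + 1) => r k) := rfl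
  rw [← hrow, ← det_of_vecMul_recursion _ (fun k j => r (k + 1) j.castSucc) _ hrec, hdet,
    det_succ_row_zero, Finset.sum_eq_single (Fin.last m) (fun j _ hj => ?_) (by simp)]
  · rw [of_apply, Fin.val_zero, hr0, Pi.single_eq_same, mul_one, Fin.val_last, Fin.succAbove_last]
    rfl
  · rw [of_apply, Fin.val_zero, hr0, Pi.single_eq_of_ne hj, mul_zero, zero_mul]

lemma associated_krylovDet_single_last (A : Matrix (Fin (m + 1)) (Fin (m + 1)) R) :
    Associated (krylovDet A (Pi.single (Fin.last m) 1))
      (krylovDet (A.submatrix Fin.castSucc Fin.castSucc) fun j => A (Fin.last m) j.castSucc) := by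
  rw [krylovDet_single_last]
  exact associated_unit_mul_left _ _ (isUnit_neg_one.pow m)

/-- The nilpotent shift matrix, with ones just above the diagonal. -/
def shiftMatrix (R : Type*) [CommRing R] (m : ℕ) : Matrix (Fin (m + 1)) (Fin (m + 1)) R :=
  of fun i j => if (j : ℕ) = i + 1 then 1 else 0

lemma vecMul_shiftMatrix (v : Fin (m + 1) → R) :
    v ᵥ* shiftMatrix R m = Fin.cons 0 fun j => v j.castSucc := by
  ext j
  cases j using Fin.cases with
  | zero => simp [shiftMatrix, vecMul, dotProduct]
  | succ j =>
    have hindex : ∀ i : Fin (m + 1), (j : ℕ) = i ↔ j.castSucc = i := fun i => by simp [Fin.ext_iff]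
    simp [shiftMatrix, vecMul, dotProduct, hindex]

lemma krylovDet_shiftMatrix (v : Fin (m + 1) → R) :
    krylovDet (shiftMatrix R m) v = v 0 ^ (m + 1) := by
  have hpow : ∀ (k : ℕ) (j : Fin (m + 1)), ((j : ℕ) < k → (v ᵥ* shiftMatrix R m ^ k) j = 0) ∧
      ((j : ℕ) = k → (v ᵥ* shiftMatrix R m ^ k) j = v 0) := fun k => by
    induction k with
    | zero =>
      exact fun j => ⟨fun h => absurd h (Nat.not_lt_zero _), fun h => by
        rw [pow_zero, vecMul_one, show j = 0 from Fin.ext h]⟩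
    | succ k ih =>
      intro j
      rw [pow_succ, ← vecMul_vecMul, vecMul_shiftMatrix]
      cases j using Fin.cases with
      | zero => simp
      | succ j => simpa using ih j.castSucc
  rw [krylovDet, det_of_isUpperTriangular]
  · simp [hpow]
  · intro i j hij
    exact (hpow i j).1 hij

end KrylovDet

section JacobianDet

variable (R : Type*) [CommRing R]

lemma sPolyK_eq_coeff_det_unitPencil (n k : ℕ) :
    sPolyK R n k = (unitPencil (mvPolynomialX (Fin n) (Fin n) R)).det.coeff k := by
  rw [unitPencil, coeff_det_one_add_X_smul_eq_sum_minors]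
  rfl

lemma pderiv_sPolyK_succ (n k : ℕ) (i l : Fin n) :
    pderiv (i, l) (sPolyK R n (k + 1)) =
      ((unitPencil (mvPolynomialX (Fin n) (Fin n) R)).adjugate l i).coeff k := by
  rw [sPolyK_eq_coeff_det_unitPencil, derivation_coeff_det_unitPencil]
  simp [Pi.single_apply, ite_and]

lemma dPoly_succ_eq_krylovDet (m : ℕ) :
    dPoly R (m + 1) (Nat.le_add_left 1 m) =
      krylovDet (-mvPolynomialX (Fin (m + 1)) (Fin (m + 1)) R) (Pi.single (Fin.last m) 1) := by
  set A := mvPolynomialX (Fin (m + 1)) (Fin (m + 1)) R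
  set P := unitPencil A
  set r : ℕ → Fin (m + 1) → _ :=
    fun k i => (P.adjugate (Fin.last m) i).coeff k
  have hr0 : r 0 = Pi.single (Fin.last m) 1 := by
    funext i
    have h := congr_fun₂ (map_coeff_zero_adjugate_unitPencil A) (Fin.last m) i
    rwa [one_eq_pi_single] at h
  have hrec : ∀ k, r (k + 1) = P.det.coeff (k + 1) • r 0 + r k ᵥ* -A := fun k => by
    funext i
    have h := congr_fun₂ (map_coeff_succ_adjugate_unitPencil A k) (Fin.last m) i
    rw [sub_eq_add_neg, ← Matrix.mul_neg, Matrix.add_apply, Matrix.smul_apply,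
      one_eq_pi_single] at h
    rw [hr0]
    exact h
  rw [← hr0, ← det_of_vecMul_recursion _ r _ hrec, dPoly]
  simp only [pderiv_sPolyK_succ]
  rfl

end JacobianDet

section GenericKrylovDet

variable {R : Type*} [CommRing R] {m : ℕ}

lemma isHomogeneous_det {σ n : Type*} [Fintype n] [DecidableEq n]
    {N : Matrix n n (MvPolynomial σ R)} {d : n → ℕ} (hN : ∀ i j, (N i j).IsHomogeneous (d i)) :
    N.det.IsHomogeneous (∑ i, d i) := by
  rw [det_apply]
  refine IsHomogeneous.sum _ _ _ fun τ _ => ?_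
  have hprod := IsHomogeneous.prod Finset.univ _ _ fun i _ => hN (τ i) i
  rw [Equiv.sum_comp τ d, ← mem_homogeneousSubmodule] at hprod
  exact zsmul_mem hprod _

lemma ringHom_comp_single_one {R S ι : Type*} [NonAssocSemiring R] [NonAssocSemiring S]
    [DecidableEq ι] (φ : R →+* S) (i : ι) :
    φ ∘ Pi.single i 1 = Pi.single i 1 := by
  funext j
  rw [Function.comp_apply, Pi.apply_single (fun _ => φ) (fun _ => map_zero φ), map_one]

/-- The Krylov determinant of the generic `m × m` matrix and a fixed row vector `v`. -/
noncomputable def genericKrylovDet (v : Fin m → R) : MvPolynomial (Fin m × Fin m) R :=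
  krylovDet (mvPolynomialX (Fin m) (Fin m) R) (C ∘ v)

lemma map_genericKrylovDet {S : Type*} [CommRing S] (φ : R →+* S) (v : Fin m → R) :
    map φ (genericKrylovDet v) = genericKrylovDet (φ ∘ v) := by
  rw [genericKrylovDet, map_krylovDet, genericKrylovDet]
  congr 1
  · ext i j : 2
    rw [map_apply, mvPolynomialX_apply, mvPolynomialX_apply, map_X]
  · exact funext fun j => map_C φ (v j)

lemma eval_genericKrylovDet (B : Matrix (Fin m) (Fin m) R) (v : Fin m → R) :
    eval (fun ij => B ij.1 ij.2) (genericKrylovDet v) = krylovDet B v := by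
  rw [genericKrylovDet, map_krylovDet]
  congr 1
  · ext i j
    rw [map_apply, mvPolynomialX_apply, eval_X]
  · exact funext fun j => eval_C (v j)

lemma isHomogeneous_genericKrylovDet (v : Fin m → R) :
    (genericKrylovDet v).IsHomogeneous (∑ k : Fin m, (k : ℕ)) := by
  have hrow : ∀ (k : ℕ) (j : Fin m),
      ((C ∘ v) ᵥ* mvPolynomialX (Fin m) (Fin m) R ^ k) j |>.IsHomogeneous k := fun k => by
    induction k with
    | zero =>
      intro j
      rw [pow_zero, vecMul_one]
      exact isHomogeneous_C _ _
    | succ k ih =>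
      intro j
      rw [pow_succ, ← vecMul_vecMul]
      exact IsHomogeneous.sum _ _ _ fun i _ => (ih i).mul (isHomogeneous_X R (i, j))
  exact isHomogeneous_det fun k j => hrow k j

lemma associated_dPoly_genericKrylovDet (R : Type*) [CommRing R] (m : ℕ) :
    Associated (dPoly R (m + 1) (Nat.le_add_left 1 m))
      (genericKrylovDet (Pi.single (Fin.last m) 1)) := by
  rw [dPoly_succ_eq_krylovDet, genericKrylovDet, ringHom_comp_single_one,
    ← neg_one_smul (MvPolynomial (Fin (m + 1) × Fin (m + 1)) R), krylovDet_smul]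
  exact associated_unit_mul_left _ _ (isUnit_neg_one.pow _)

end GenericKrylovDet

section LastColumn

variable {R : Type*} [CommRing R] {m : ℕ}

/-- Splits the positions of an `(m + 1) × (m + 1)` matrix into the last column, the upper left block
and the rest of the last row. -/
def lastColEquiv (m : ℕ) : Fin (m + 1) × Fin (m + 1) ≃ Fin (m + 1) ⊕ (Fin m × Fin m) ⊕ Fin m where
  toFun p := Fin.lastCases (.inl p.1)
    (fun j => .inr (Fin.lastCases (.inr j) (fun i => .inl (i, j)) p.1)) p.2
  invFun := Sum.elim (·, Fin.last m)
    (Sum.elim (Prod.map Fin.castSucc Fin.castSucc) fun j => (Fin.last m, j.castSucc))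
  left_inv := by
    rintro ⟨i, j⟩
    cases j using Fin.lastCases with
    | last => simp
    | cast j => cases i using Fin.lastCases <;> simp
  right_inv := by rintro (i | ⟨i, j⟩ | j) <;> simp

/-- The coordinate ring of `(m + 1) × (m + 1)` matrices as polynomials in the last column, over
polynomials in the upper left block, over polynomials in the rest of the last row. -/
abbrev LastColRing (R : Type*) [CommRing R] (m : ℕ) : Type _ :=
  MvPolynomial (Fin (m + 1)) (MvPolynomial (Fin m × Fin m) (MvPolynomial (Fin m) R))

/-- Separates the last column, the upper left block and the rest of the last row in polynomials on
`(m + 1) × (m + 1)` matrices. -/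
noncomputable def lastColAlgEquiv (R : Type*) [CommRing R] (m : ℕ) :
    MvPolynomial (Fin (m + 1) × Fin (m + 1)) R ≃ₐ[R] LastColRing R m :=
  (renameEquiv R (lastColEquiv m)).trans
    ((sumAlgEquiv R _ _).trans (mapAlgEquiv _ (sumAlgEquiv R _ _)))

@[simp]
lemma lastColAlgEquiv_X_last (i : Fin (m + 1)) :
    lastColAlgEquiv R m (X (i, Fin.last m)) = X i := by
  simp [lastColAlgEquiv, lastColEquiv]

@[simp]
lemma lastColAlgEquiv_X_castSucc_castSucc (i j : Fin m) :
    lastColAlgEquiv R m (X (i.castSucc, j.castSucc)) = C (X (i, j)) := by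
  simp [lastColAlgEquiv, lastColEquiv]

@[simp]
lemma lastColAlgEquiv_X_last_castSucc (j : Fin m) :
    lastColAlgEquiv R m (X (Fin.last m, j.castSucc)) = C (C (X j)) := by
  simp [lastColAlgEquiv, lastColEquiv]

lemma associated_lastColAlgEquiv_genericKrylovDet_single_last (R : Type*) [CommRing R] (m : ℕ) :
    Associated (lastColAlgEquiv R m (genericKrylovDet (Pi.single (Fin.last m) 1)))
      (C (genericKrylovDet X)) := by
  let φ : MvPolynomial (Fin (m + 1) × Fin (m + 1)) R →+* LastColRing R m := lastColAlgEquiv R m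
  let A := mvPolynomialX (Fin (m + 1)) (Fin (m + 1)) R
  have hblock : ((A.submatrix Fin.castSucc Fin.castSucc).map φ : Matrix _ _ (LastColRing R m)) =
      (mvPolynomialX (Fin m) (Fin m) (MvPolynomial (Fin m) R)).map C := by
    ext i j : 2
    simp [φ, A]
  have hrow : φ ∘ (fun j => A (Fin.last m) j.castSucc) = C ∘ C ∘ X := by
    funext j
    simp [φ, A]
  have hassoc := (associated_krylovDet_single_last A).map φ
  rw [map_krylovDet (S := LastColRing R m) φ (A.submatrix _ _), hblock, hrow,
    ← map_krylovDet] at hassoc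
  rwa [genericKrylovDet, ringHom_comp_single_one]

lemma exists_det_lastCol_eq_sum (M : Matrix (Fin (m + 1)) (Fin m) R)
    {N : Matrix (Fin (m + 1)) (Fin (m + 1)) (MvPolynomial (Fin (m + 1)) R)}
    (hlast : ∀ i, N i (Fin.last m) = X i) (hcast : ∀ i j, N i (Fin.castSucc j) = C (M i j)) :
    ∃ a : Fin (m + 1) → R, N.det = ∑ i, C (a i) * X i ∧
      a (Fin.last m) = (M.submatrix Fin.castSucc id).det := by
  refine ⟨fun i => (-1) ^ (i + m : ℕ) * (M.submatrix i.succAbove id).det, ?_, ?_⟩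
  · rw [det_succ_column _ (Fin.last m)]
    refine Finset.sum_congr rfl fun i _ => ?_
    have hminor : N.submatrix i.succAbove (Fin.last m).succAbove =
        (M.submatrix i.succAbove id).map C := by
      ext k j : 2
      simp [hcast]
    rw [hminor, ← RingHom.mapMatrix_apply, ← RingHom.map_det, hlast, map_mul, mul_right_comm]
    simp
  · dsimp only
    rw [Fin.val_last, Even.neg_one_pow ⟨m, rfl⟩, one_mul, Fin.succAbove_last]

lemma exists_lastColAlgEquiv_genDet :
    ∃ a : Fin (m + 1) → MvPolynomial (Fin m × Fin m) (MvPolynomial (Fin m) R),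
      lastColAlgEquiv R m (genDet R (m + 1)) = ∑ i, C (a i) * X i ∧
        a (Fin.last m) = (mvPolynomialX (Fin m) (Fin m) (MvPolynomial (Fin m) R)).det := by
  let M : Matrix (Fin (m + 1)) (Fin m) (MvPolynomial (Fin m × Fin m) (MvPolynomial (Fin m) R)) :=
    of fun i j => Fin.lastCases (C (X j)) (fun k => X (k, j)) i
  obtain ⟨a, hdet, hlast⟩ := exists_det_lastCol_eq_sum M
    (N := of fun i j => lastColAlgEquiv R m (X (i, j))) (by simp) fun i j => by
      cases i using Fin.lastCases <;> simp [M]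
  refine ⟨a, ?_, ?_⟩
  · rw [← hdet]
    exact AlgEquiv.map_det (T := LastColRing R m) (lastColAlgEquiv R m) (of fun i j => X (i, j))
  · have hblock : M.submatrix Fin.castSucc id =
        mvPolynomialX (Fin m) (Fin m) (MvPolynomial (Fin m) R) := by
      ext i j : 2
      simp [M]
    rw [hlast, hblock]

end LastColumn

section Primality

lemma prime_genericKrylovDet_single_last_iff (R : Type*) [CommRing R] (m : ℕ) :
    Prime (genericKrylovDet (Pi.single (Fin.last m) 1 : Fin (m + 1) → R)) ↔
      Prime (genericKrylovDet (X : Fin m → MvPolynomial (Fin m) R)) := by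
  rw [← MulEquiv.prime_iff (lastColAlgEquiv R m).toMulEquiv, ← prime_C_iff (Fin (m + 1))]
  exact (associated_lastColAlgEquiv_genericKrylovDet_single_last R m).prime_iff

lemma irreducible_genericKrylovDet_X {R : Type*} [CommRing R] [IsDomain R] {m : ℕ}
    (h : Irreducible (genericKrylovDet (Pi.single (Fin.last (m + 1)) 1 : Fin (m + 2) → R))) :
    Irreducible (genericKrylovDet (X : Fin (m + 2) → MvPolynomial (Fin (m + 2)) R)) := by
  let φ : MvPolynomial (Fin (m + 2)) R →+* R := eval (Pi.single (Fin.last (m + 1)) 1)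
  have hφ : map φ (genericKrylovDet X) =
      genericKrylovDet (Pi.single (Fin.last (m + 1)) 1) := by
    rw [map_genericKrylovDet]
    congr 1
    funext j
    simp [φ]
  have hne : map φ (genericKrylovDet X) ≠ 0 := hφ ▸ h.ne_zero
  refine irreducible_of_irreducible_map φ ?_ (hφ ▸ h) fun a ha hunit => ?_
  · rw [((isHomogeneous_genericKrylovDet X).map φ).totalDegree hne,
      (isHomogeneous_genericKrylovDet X).totalDegree fun h0 => hne (by rw [h0, map_zero])]
  · have hdvd : a ∣ X 0 ^ (m + 2) := by
      have hshift := map_dvd (eval fun ij => shiftMatrix _ (m + 1) ij.1 ij.2) ha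
      rwa [eval_C, eval_genericKrylovDet, krylovDet_shiftMatrix] at hshift
    obtain ⟨k, -, hk⟩ := (dvd_prime_pow X_prime _).mp hdvd
    have hX : IsUnit (φ (X 0) ^ k) := by
      rw [← map_pow]
      exact (hk.map φ).isUnit hunit
    have hk0 : k = 0 := by
      by_contra hk0
      simp [φ, zero_pow hk0] at hX
    rw [hk0, pow_zero] at hk
    exact hk.symm.isUnit isUnit_one

lemma exists_isUnit_eval_genericKrylovDet (R : Type*) [CommRing R] (m : ℕ) :
    ∃ x, IsUnit (eval x (genericKrylovDet (Pi.single (Fin.last (m + 1)) 1 : Fin (m + 2) → R))) := by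
  let A : Matrix (Fin (m + 2)) (Fin (m + 2)) R :=
    of (Fin.lastCases (Pi.single 0 1) fun i => Pi.single i.succ 1)
  have hblock : A.submatrix Fin.castSucc Fin.castSucc = shiftMatrix R m := by
    ext i j
    simp [A, shiftMatrix, Pi.single_apply, Fin.ext_iff]
  refine ⟨fun ij => A ij.1 ij.2, ?_⟩
  rw [eval_genericKrylovDet, krylovDet_single_last, hblock, krylovDet_shiftMatrix]
  simp [A]

lemma prime_genericKrylovDet_X_of_uniqueFactorizationMonoid (R : Type*) [CommRing R] [IsDomain R]
    [UniqueFactorizationMonoid R] (m : ℕ) :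
    Prime (genericKrylovDet (X : Fin (m + 1) → MvPolynomial (Fin (m + 1)) R)) := by
  induction m with
  | zero =>
    have hdet : genericKrylovDet (X : Fin 1 → MvPolynomial (Fin 1) R) = C (X 0) := by
      simp [genericKrylovDet, krylovDet]
    rw [hdet, prime_C_iff]
    exact X_prime
  | succ m ih =>
    have hδ := (prime_genericKrylovDet_single_last_iff R (m + 1)).mpr ih
    exact (irreducible_genericKrylovDet_X hδ.irreducible).prime

lemma prime_genericKrylovDet_X (R : Type*) [CommRing R] [IsDomain R] (m : ℕ) :
    Prime (genericKrylovDet (X : Fin (m + 1) → MvPolynomial (Fin (m + 1)) R)) := by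
  rw [← prime_genericKrylovDet_single_last_iff]
  obtain ⟨x, hx⟩ := exists_isUnit_eval_genericKrylovDet R m
  refine prime_of_prime_map_fractionRing (FractionRing R) x hx ?_
  rw [map_genericKrylovDet, ringHom_comp_single_one, prime_genericKrylovDet_single_last_iff]
  exact prime_genericKrylovDet_X_of_uniqueFactorizationMonoid (FractionRing R) m

lemma not_genericKrylovDet_X_dvd_det (R : Type*) [CommRing R] [Nontrivial R] (m : ℕ) :
    ¬ genericKrylovDet (X : Fin (m + 1) → MvPolynomial (Fin (m + 1)) R) ∣
      (mvPolynomialX (Fin (m + 1)) (Fin (m + 1)) (MvPolynomial (Fin (m + 1)) R)).det := by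
  intro hdvd
  have hmap := map_dvd (map (eval (0 : Fin (m + 1) → R))) hdvd
  have hzero : eval (0 : Fin (m + 1) → R) ∘ X = 0 := by
    funext j
    simp
  have hdet : map (eval (0 : Fin (m + 1) → R)) (mvPolynomialX (Fin (m + 1)) (Fin (m + 1))
      (MvPolynomial (Fin (m + 1)) R)).det = (mvPolynomialX (Fin (m + 1)) (Fin (m + 1)) R).det := by
    rw [RingHom.map_det]
    congr 1
    ext i j : 2
    simp
  rw [map_genericKrylovDet, hzero, hdet, genericKrylovDet, krylovDet, det_eq_zero_of_row_eq_zero 0,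
    zero_dvd_iff] at hmap
  · exact det_mvPolynomialX_ne_zero _ R hmap
  · intro j
    simp

end Primality

theorem stmt17_general (R : Type*) [CommRing R] [IsDomain R] (n : ℕ) (hn : 2 ≤ n) :
    (Ideal.span {genDet R n - 1, dPoly R n (by omega)}).IsPrime := by
  obtain ⟨m, rfl⟩ : ∃ m, n = m + 2 := ⟨n - 2, by omega⟩
  obtain ⟨a, hdet, hlast⟩ := exists_lastColAlgEquiv_genDet (R := R) (m := m + 1)
  have hd : Associated (lastColAlgEquiv R (m + 1) (dPoly R (m + 2) (Nat.le_add_left 1 (m + 1))))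
      (C (genericKrylovDet X) : LastColRing R (m + 1)) :=
    ((associated_dPoly_genericKrylovDet R (m + 1)).map (lastColAlgEquiv R (m + 1))).trans
      (associated_lastColAlgEquiv_genericKrylovDet_single_last R (m + 1))
  refine isPrime_span_sub_one_pair (lastColAlgEquiv R (m + 1)).toRingEquiv
    (prime_genericKrylovDet_X R m) hd hdet (i := Fin.last (m + 1)) ?_
  rw [hlast]
  exact not_genericKrylovDet_X_dvd_det R m

/-- for an algebraically closed field `K` and `n ≥ 3`, the ideal of
`K[Mat_n]` generated by `det − 1` and `d` is prime. -/
theorem stmt17 (K : Type*) [Field K] [IsAlgClosed K] (n : ℕ) (hn : 3 ≤ n) :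
    (Ideal.span {genDet K n - 1, dPoly K n (by omega)}).IsPrime :=
  stmt17_general K n (by omega)
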